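/- arXiv:1802.05501 — 3 statements merged into one kernel-verified Lean document; each statement's English description precedes it below -/
import Mathlib

section
/- Let k be a positive integer, let G be a finite simple graph, let I ⊆ V(G), let P be an I-connected path decomposition of G of width at most k−1, and let S and S' be bottlenecks of G. If P is S'-structured, then S and S' are well-nested in P, i.e., I(S',P) ⊊ I(S,P), or I(S,P) ⊆ I(S',P), or I(S,P) ∩ I(S',P) = ∅. -/
/-!
Write `[α, β]` and `[α', β']` for the intervals of `S` and `S'`. If the two are not well-nested,
they cross: `α < α' ≤ β < β'` or `α' < α ≤ β' < β`. The second case is the mirror image of the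
first, so take the first one.

As `S'` lies in every bag of `[α', β']`, a component of `G - S'` that does not wait in this
interval is an in-branch of `S'` (`inBranch_of_not_waitsIn`). Let `H` be an in-branch of `S` with
last index `β`. Some vertex `v` of `H` lies in bag `β` but not in bag `β + 1`; hence the component
`K` of `v` in `G - S'` does not wait, and `K` is an in-branch of `S'`. In-branches of `S'` avoid
all bags before `α'`, whereas `S` is contained in bag `α`; so they are disjoint from `S`. Finally
the in-branch `L` of `S'` with last index `β'` is not contained in `H`, as `β < β'`.

These data force `S = S'` (`eq_of_crossing_branches`), which contradicts `α < α'`. Indeed `K` is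
connected, avoids `S` and meets `H`, so `K ⊆ H`. A vertex of `S' \ S` would be adjacent to `K`,
hence lie in `H`, and adjacent to `L`, which would put `L` inside `H`; thus `S' ⊆ S`. Now `H` is
connected, avoids `S'` and meets `K`, so `H ⊆ K`. Therefore `H = K` and `S = N(H) = N(K) = S'`.

Crossing intervals have more than one element, and this already implies that both `S` and `S'` have
in-branches: without in-branches both endpoints take the default value `0`.
-/

open SimpleGraph

variable {V : Type*}

/-- `N_G(Y)`: the set of vertices outside `Y` having a neighbor in `Y`. -/
def nbhdSet (G : SimpleGraph V) (Y : Set V) : Set V :=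
  {v | v ∉ Y ∧ ∃ u ∈ Y, G.Adj u v}

/-- `C` is a connected component of the subgraph of `G` induced by `U`. -/
def IsCompIn (G : SimpleGraph V) (U C : Set V) : Prop :=
  C.Nonempty ∧ C ⊆ U ∧ (G.induce C).Connected ∧
    ∀ u ∈ C, ∀ v ∈ U, G.Adj u v → v ∈ C

/-- `C` is a connected component of `G - S`. -/
def IsCompOf (G : SimpleGraph V) (S C : Set V) : Prop :=
  IsCompIn G Sᶜ C

/-- `C` is an `S`-branch: a connected component of `G - S` with `N_G(C) = S`. -/
def IsBranch (G : SimpleGraph V) (S C : Set V) : Prop :=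
  IsCompOf G S C ∧ nbhdSet G C = S

/-- `S` is a bottleneck (for the width parameter `k`): a nonempty set with
at least `2k+1` `S`-branches. -/
def IsBottleneck (G : SimpleGraph V) (k : ℕ) (S : Set V) : Prop :=
  S.Nonempty ∧ 2 * k + 1 ≤ {C : Set V | IsBranch G S C}.ncard

/-- `(X 0, …, X (l-1))` is a path decomposition of `G`. -/
def IsPathDecomp (G : SimpleGraph V) (l : ℕ) (X : ℕ → Set V) : Prop :=
  (∀ v, ∃ i < l, v ∈ X i) ∧
  (∀ u v, G.Adj u v → ∃ i < l, u ∈ X i ∧ v ∈ X i) ∧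
  (∀ i j m, i ≤ j → j ≤ m → m < l → X i ∩ X m ⊆ X j)

/-- The width of a path decomposition: the maximum bag size minus one. -/
noncomputable def pdWidth (l : ℕ) (X : ℕ → Set V) : ℕ :=
  ((Finset.range l).sup fun i => (X i).ncard) - 1

/-- The set of indices of bags meeting the vertex set `C`. -/
def supp (l : ℕ) (X : ℕ → Set V) (C : Set V) : Set ℕ :=
  {t | t < l ∧ (C ∩ X t).Nonempty}

/-- `a(C)`: the first index of a bag meeting `C`. -/
noncomputable def firstIdx (l : ℕ) (X : ℕ → Set V) (C : Set V) : ℕ :=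
  sInf (supp l X C)

/-- `b(C)`: the last index of a bag meeting `C`. -/
noncomputable def lastIdx (l : ℕ) (X : ℕ → Set V) (C : Set V) : ℕ :=
  sSup (supp l X C)

/-- `C` is an in-branch of `S` with respect to the decomposition:
an `S`-branch with `S ⊆ X (a C)` and `S ⊆ X (b C)`. -/
def IsInBranch (G : SimpleGraph V) (l : ℕ) (X : ℕ → Set V) (S C : Set V) : Prop :=
  IsBranch G S C ∧ S ⊆ X (firstIdx l X C) ∧ S ⊆ X (lastIdx l X C)

/-- `α(S)`: the minimum of `a(H)` over in-branches `H` of `S`. -/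
noncomputable def botStart (G : SimpleGraph V) (l : ℕ) (X : ℕ → Set V) (S : Set V) : ℕ :=
  sInf {i | ∃ C, IsInBranch G l X S C ∧ i = firstIdx l X C}

/-- `β(S)`: the maximum of `b(H)` over in-branches `H` of `S`. -/
noncomputable def botEnd (G : SimpleGraph V) (l : ℕ) (X : ℕ → Set V) (S : Set V) : ℕ :=
  sSup {i | ∃ C, IsInBranch G l X S C ∧ i = lastIdx l X C}

/-- The interval `I(S,P) = [α(S), β(S)]` of a bottleneck `S`. -/
noncomputable def botInterval (G : SimpleGraph V) (l : ℕ) (X : ℕ → Set V) (S : Set V) : Set ℕ :=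
  Set.Icc (botStart G l X S) (botEnd G l X S)

/-- A pre-branch of `S`. -/
def IsPreBranch (G : SimpleGraph V) (l : ℕ) (X : ℕ → Set V) (S C : Set V) : Prop :=
  IsBranch G S C ∧ ¬ IsInBranch G l X S C ∧ firstIdx l X C < botStart G l X S

/-- A post-branch of `S`. -/
def IsPostBranch (G : SimpleGraph V) (l : ℕ) (X : ℕ → Set V) (S C : Set V) : Prop :=
  IsBranch G S C ∧ ¬ IsInBranch G l X S C ∧
    botStart G l X S ≤ firstIdx l X C ∧ botEnd G l X S < lastIdx l X C

/-- `C` waits in the interval `[i, j]` of the decomposition. -/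
def WaitsIn (X : ℕ → Set V) (C : Set V) (i j : ℕ) : Prop :=
  ∀ t, i ≤ t → t ≤ j → C ∩ X t = C ∩ X i

/-- The decomposition is `S`-structured: every component of `G - S` that is not an
`S`-branch, and every pre- or post-branch of `S`, waits in `I(S,P)`. -/
def IsStructured (G : SimpleGraph V) (l : ℕ) (X : ℕ → Set V) (S : Set V) : Prop :=
  ∀ C : Set V,
    ((IsCompOf G S C ∧ ¬ IsBranch G S C) ∨ IsPreBranch G l X S C ∨ IsPostBranch G l X S C) →
    WaitsIn X C (botStart G l X S) (botEnd G l X S)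

/-- The decomposition is `I`-connected: every connected component of the subgraph
induced by any prefix of bags contains a vertex of `I`. -/
def IsIConn (G : SimpleGraph V) (l : ℕ) (X : ℕ → Set V) (I : Set V) : Prop :=
  ∀ i < l, ∀ C : Set V, IsCompIn G {v | ∃ j ≤ i, v ∈ X j} C → (C ∩ I).Nonempty

/-! ### Components and branches -/

lemma subset_of_isCompIn {G : SimpleGraph V} {U A C : Set V} (hC : IsCompIn G U C)
    (hA : (G.induce A).Connected) (hAU : A ⊆ U) {v : V} (hvA : v ∈ A) (hvC : v ∈ C) :
    A ⊆ C := by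
  intro w hw
  obtain ⟨p⟩ := hA.preconnected ⟨v, hvA⟩ ⟨w, hw⟩
  have key : ∀ (x y : A), (G.induce A).Walk x y → (x : V) ∈ C → (y : V) ∈ C := by
    intro x y p
    induction p with
    | nil => exact id
    | @cons x y z hxy _ ih => exact fun hx => ih (hC.2.2.2 x hx y (hAU y.2) hxy)
  exact key _ _ p hvC

lemma exists_isCompIn (G : SimpleGraph V) {U : Set V} {v : V} (hv : v ∈ U) :
    ∃ C, IsCompIn G U C ∧ v ∈ C := by
  -- The component is the union of all connected subsets of `U` containing `v`.
  let F : Set (Set V) := {A | v ∈ A ∧ A ⊆ U ∧ (G.induce A).Connected}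
  have hsing : {v} ∈ F :=
    ⟨rfl, by simpa using hv, ⟨SimpleGraph.Preconnected.of_subsingleton⟩⟩
  have hvF : v ∈ ⋃₀ F := ⟨{v}, hsing, rfl⟩
  refine ⟨⋃₀ F, ⟨⟨v, hvF⟩, ?_, ?_, ?_⟩, hvF⟩
  · rintro w ⟨A, hA, hwA⟩
    exact hA.2.1 hwA
  · exact induce_sUnion_connected_of_pairwise_not_disjoint ⟨_, hsing⟩
      (fun hs ht => ⟨v, hs.1, ht.1⟩) (fun hs => hs.2.2)
  · rintro u ⟨A, hA, huA⟩ w hw huw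
    refine ⟨A ∪ {u, w}, ⟨Or.inl hA.1, ?_, ?_⟩, by simp⟩
    · refine Set.union_subset hA.2.1 ?_
      rintro x (rfl | rfl)
      · exact hA.2.1 huA
      · exact hw
    · exact induce_union_connected hA.2.2.preconnected
        (induce_pair_connected_of_adj huw).preconnected ⟨u, huA, by simp⟩

/-- A branch `H` of `S` that meets one branch `K` of `S'` without containing another branch `L`
of `S'` forces `S = S'`, provided that `K` and `L` are disjoint from `S`. -/
lemma eq_of_crossing_branches {G : SimpleGraph V} {S S' H K L : Set V}
    (hH : IsBranch G S H) (hK : IsBranch G S' K) (hL : IsBranch G S' L)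
    (hKS : K ⊆ Sᶜ) (hLS : L ⊆ Sᶜ) {v : V} (hvH : v ∈ H) (hvK : v ∈ K) (hLH : ¬ L ⊆ H) :
    S = S' := by
  have hKH : K ⊆ H := subset_of_isCompIn hH.1 hK.1.2.2.1 hKS hvK hvH
  have hS'S : S' ⊆ S := by
    intro s hs
    by_contra hsS
    obtain ⟨-, u, huK, hus⟩ : s ∈ nbhdSet G K := hK.2.symm ▸ hs
    obtain ⟨-, w, hwL, hws⟩ : s ∈ nbhdSet G L := hL.2.symm ▸ hs
    have hsH : s ∈ H := hH.1.2.2.2 u (hKH huK) s hsS hus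
    have hwH : w ∈ H := hH.1.2.2.2 s hsH w (hLS hwL) hws.symm
    exact hLH (subset_of_isCompIn hH.1 hL.1.2.2.1 hLS hwL hwH)
  have hHK : H ⊆ K :=
    subset_of_isCompIn hK.1 hH.1.2.2.1
      (hH.1.2.1.trans (Set.compl_subset_compl.2 hS'S)) hvH hvK
  rw [← hH.2, ← hK.2, hHK.antisymm hKH]

/-! ### Indices of bags -/

lemma bddAbove_supp (l : ℕ) (X : ℕ → Set V) (C : Set V) : BddAbove (supp l X C) :=
  ⟨l, fun _ h => h.1.le⟩

lemma supp_nonempty {G : SimpleGraph V} {l : ℕ} {X : ℕ → Set V} (hP : IsPathDecomp G l X)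
    {C : Set V} (hC : C.Nonempty) : (supp l X C).Nonempty := by
  obtain ⟨v, hv⟩ := hC
  obtain ⟨i, hi, hvi⟩ := hP.1 v
  exact ⟨i, hi, v, hv, hvi⟩

lemma firstIdx_mem {G : SimpleGraph V} {l : ℕ} {X : ℕ → Set V} (hP : IsPathDecomp G l X)
    {C : Set V} (hC : C.Nonempty) : firstIdx l X C ∈ supp l X C :=
  Nat.sInf_mem (supp_nonempty hP hC)

lemma lastIdx_mem {G : SimpleGraph V} {l : ℕ} {X : ℕ → Set V} (hP : IsPathDecomp G l X)
    {C : Set V} (hC : C.Nonempty) : lastIdx l X C ∈ supp l X C :=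
  Nat.sSup_mem (supp_nonempty hP hC) (bddAbove_supp l X C)

lemma firstIdx_le {l : ℕ} {X : ℕ → Set V} {C : Set V} {t : ℕ} (h : t ∈ supp l X C) :
    firstIdx l X C ≤ t :=
  Nat.sInf_le h

lemma le_lastIdx {l : ℕ} {X : ℕ → Set V} {C : Set V} {t : ℕ} (h : t ∈ supp l X C) :
    t ≤ lastIdx l X C :=
  le_csSup (bddAbove_supp l X C) h

lemma botStart_le {G : SimpleGraph V} {l : ℕ} {X : ℕ → Set V} {S C : Set V}
    (hC : IsInBranch G l X S C) : botStart G l X S ≤ firstIdx l X C :=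
  Nat.sInf_le ⟨C, hC, rfl⟩

lemma bddAbove_lastIdx {G : SimpleGraph V} {l : ℕ} {X : ℕ → Set V} (hP : IsPathDecomp G l X)
    (S : Set V) : BddAbove {i | ∃ C, IsInBranch G l X S C ∧ i = lastIdx l X C} := by
  refine ⟨l, ?_⟩
  rintro i ⟨C, hC, rfl⟩
  exact (lastIdx_mem hP hC.1.1.1).1.le

lemma le_botEnd {G : SimpleGraph V} {l : ℕ} {X : ℕ → Set V} (hP : IsPathDecomp G l X)
    {S C : Set V} (hC : IsInBranch G l X S C) : lastIdx l X C ≤ botEnd G l X S :=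
  le_csSup (bddAbove_lastIdx hP S) ⟨C, hC, rfl⟩

/-- A set whose interval has more than one element has in-branches attaining both endpoints. -/
lemma exists_inBranch_of_lt {G : SimpleGraph V} {l : ℕ} {X : ℕ → Set V}
    (hP : IsPathDecomp G l X) {S : Set V} (h : botStart G l X S < botEnd G l X S) :
    (∃ C, IsInBranch G l X S C ∧ firstIdx l X C = botStart G l X S) ∧
    (∃ C, IsInBranch G l X S C ∧ lastIdx l X C = botEnd G l X S) := by
  have hne : ∃ C, IsInBranch G l X S C := by
    by_contra hno
    have hempty : {i | ∃ C, IsInBranch G l X S C ∧ i = lastIdx l X C} = ∅ := by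
      ext i
      simp only [Set.mem_ofPred_eq, Set.mem_empty_iff_false, iff_false]
      rintro ⟨C, hC, -⟩
      exact hno ⟨C, hC⟩
    have h0 : botEnd G l X S = 0 := by
      unfold botEnd
      rw [hempty]
      exact csSup_empty
    omega
  obtain ⟨C, hC⟩ := hne
  constructor
  · obtain ⟨D, hD, hDi⟩ := Nat.sInf_mem
      (s := {i | ∃ C, IsInBranch G l X S C ∧ i = firstIdx l X C}) ⟨_, C, hC, rfl⟩
    exact ⟨D, hD, hDi.symm⟩
  · obtain ⟨D, hD, hDi⟩ := Nat.sSup_mem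
      (s := {i | ∃ C, IsInBranch G l X S C ∧ i = lastIdx l X C}) ⟨_, C, hC, rfl⟩
      (bddAbove_lastIdx hP S)
    exact ⟨D, hD, hDi.symm⟩

lemma botEnd_lt {G : SimpleGraph V} {l : ℕ} {X : ℕ → Set V}
    (hP : IsPathDecomp G l X) {S : Set V} (h : botStart G l X S < botEnd G l X S) :
    botEnd G l X S < l := by
  obtain ⟨D, hD, hDe⟩ := (exists_inBranch_of_lt hP h).2
  exact hDe ▸ (lastIdx_mem hP hD.1.1.1).1

lemma subset_bag {G : SimpleGraph V} {l : ℕ} {X : ℕ → Set V}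
    (hP : IsPathDecomp G l X) {S : Set V} (h : botStart G l X S < botEnd G l X S)
    {t : ℕ} (h1 : botStart G l X S ≤ t) (h2 : t ≤ botEnd G l X S) : S ⊆ X t := by
  obtain ⟨⟨C, hC, hCs⟩, ⟨D, hD, hDe⟩⟩ := exists_inBranch_of_lt hP h
  intro s hs
  exact hP.2.2 _ t _ h1 h2 (botEnd_lt hP h) ⟨hCs ▸ hC.2.1 hs, hDe ▸ hD.2.2 hs⟩

/-- In an `S`-structured decomposition only in-branches change within the interval of `S`: a branch
living inside the interval is an in-branch because all the bags there contain `S`, and every other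
component waits. -/
lemma inBranch_of_not_waitsIn {G : SimpleGraph V} {l : ℕ} {X : ℕ → Set V}
    (hP : IsPathDecomp G l X) {S : Set V} (h : botStart G l X S < botEnd G l X S)
    (hstr : IsStructured G l X S) {C : Set V} (hC : IsCompOf G S C)
    (hwait : ¬ WaitsIn X C (botStart G l X S) (botEnd G l X S)) : IsInBranch G l X S C := by
  by_contra hin
  have hbr : IsBranch G S C := by
    by_contra hbr
    exact hwait (hstr C (Or.inl ⟨hC, hbr⟩))
  have h1 : botStart G l X S ≤ firstIdx l X C := by
    by_contra h1
    exact hwait (hstr C (Or.inr (Or.inl ⟨hbr, hin, not_le.1 h1⟩)))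
  have h2 : lastIdx l X C ≤ botEnd G l X S := by
    by_contra h2
    exact hwait (hstr C (Or.inr (Or.inr ⟨hbr, hin, h1, not_le.1 h2⟩)))
  have h3 : firstIdx l X C ≤ lastIdx l X C := le_lastIdx (firstIdx_mem hP hC.1)
  exact hin ⟨hbr, subset_bag hP h h1 (h3.trans h2), subset_bag hP h (h1.trans h3) h2⟩

/-- A vertex that belongs to exactly one of two bags of the interval of `S` lies in an in-branch
of `S`. -/
lemma exists_inBranch_of_bag_change {G : SimpleGraph V} {l : ℕ} {X : ℕ → Set V}
    (hP : IsPathDecomp G l X) {S : Set V} (hstr : IsStructured G l X S) {v : V} {i j : ℕ}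
    (hi1 : botStart G l X S ≤ i) (hi2 : i ≤ botEnd G l X S)
    (hj1 : botStart G l X S ≤ j) (hj2 : j ≤ botEnd G l X S)
    (hvi : v ∈ X i) (hvj : v ∉ X j) : ∃ C, IsInBranch G l X S C ∧ v ∈ C := by
  have hij : i ≠ j := by
    rintro rfl
    exact hvj hvi
  have h : botStart G l X S < botEnd G l X S := by omega
  have hvS : v ∈ Sᶜ := fun hvS => hvj (subset_bag hP h hj1 hj2 hvS)
  obtain ⟨C, hC, hvC⟩ := exists_isCompIn G hvS
  refine ⟨C, inBranch_of_not_waitsIn hP h hstr hC fun hwait => ?_, hvC⟩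
  have heq := (hwait i hi1 hi2).trans (hwait j hj1 hj2).symm
  exact hvj (heq.subset ⟨hvC, hvi⟩).2

/-! ### Crossing intervals -/

lemma not_cross_right {G : SimpleGraph V} {l : ℕ} {X : ℕ → Set V}
    (hP : IsPathDecomp G l X) {S S' : Set V} (hstr : IsStructured G l X S')
    (h1 : botStart G l X S < botStart G l X S') (h2 : botStart G l X S' ≤ botEnd G l X S)
    (h3 : botEnd G l X S < botEnd G l X S') : False := by
  have hlt : botStart G l X S < botEnd G l X S := by omega
  have hlt' : botStart G l X S' < botEnd G l X S' := by omega
  have hl' := botEnd_lt hP hlt'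
  obtain ⟨H, hH, hHe⟩ := (exists_inBranch_of_lt hP hlt).2
  obtain ⟨L, hL, hLe⟩ := (exists_inBranch_of_lt hP hlt').2
  obtain ⟨-, v, hvH, hv⟩ := lastIdx_mem hP hH.1.1.1
  have hv' : v ∉ X (botEnd G l X S + 1) := by
    intro hv'
    have := le_lastIdx (l := l) (C := H) ⟨by omega, v, hvH, hv'⟩
    omega
  rw [hHe] at hv
  obtain ⟨K, hK, hvK⟩ :=
    exists_inBranch_of_bag_change hP hstr h2 h3.le (by omega) (by omega) hv hv'
  have hdisj : ∀ C, IsInBranch G l X S' C → C ⊆ Sᶜ := by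
    intro C hC s hsC hsS
    have := firstIdx_le (l := l) (C := C)
      ⟨by omega, s, hsC, subset_bag hP hlt le_rfl hlt.le hsS⟩
    have := botStart_le hC
    omega
  have hLH : ¬ L ⊆ H := by
    intro hLH
    obtain ⟨hlen, w, hwL, hw⟩ := lastIdx_mem hP hL.1.1.1
    have := le_lastIdx (C := H) ⟨hlen, w, hLH hwL, hw⟩
    omega
  obtain rfl := eq_of_crossing_branches hH.1 hK.1 hL.1 (hdisj K hK) (hdisj L hL) hvH hvK hLH
  omega

/-- The mirror image of `not_cross_right`. -/
lemma not_cross_left {G : SimpleGraph V} {l : ℕ} {X : ℕ → Set V}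
    (hP : IsPathDecomp G l X) {S S' : Set V} (hstr : IsStructured G l X S')
    (h1 : botStart G l X S' < botStart G l X S) (h2 : botStart G l X S ≤ botEnd G l X S')
    (h3 : botEnd G l X S' < botEnd G l X S) : False := by
  have hlt : botStart G l X S < botEnd G l X S := by omega
  have hlt' : botStart G l X S' < botEnd G l X S' := by omega
  have hl := botEnd_lt hP hlt
  obtain ⟨H, hH, hHs⟩ := (exists_inBranch_of_lt hP hlt).1
  obtain ⟨L, hL, hLs⟩ := (exists_inBranch_of_lt hP hlt').1
  obtain ⟨-, v, hvH, hv⟩ := firstIdx_mem hP hH.1.1.1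
  have hv' : v ∉ X (botStart G l X S - 1) := by
    intro hv'
    have := firstIdx_le (l := l) (C := H) ⟨by omega, v, hvH, hv'⟩
    omega
  rw [hHs] at hv
  obtain ⟨K, hK, hvK⟩ :=
    exists_inBranch_of_bag_change hP hstr h1.le h2 (by omega) (by omega) hv hv'
  have hdisj : ∀ C, IsInBranch G l X S' C → C ⊆ Sᶜ := by
    intro C hC s hsC hsS
    have := le_lastIdx (l := l) (C := C)
      ⟨hl, s, hsC, subset_bag hP hlt hlt.le le_rfl hsS⟩
    have := le_botEnd hP hC
    omega
  have hLH : ¬ L ⊆ H := by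
    intro hLH
    obtain ⟨hlen, w, hwL, hw⟩ := firstIdx_mem hP hL.1.1.1
    have := firstIdx_le (C := H) ⟨hlen, w, hLH hwL, hw⟩
    omega
  obtain rfl := eq_of_crossing_branches hH.1 hK.1 hL.1 (hdisj K hK) (hdisj L hL) hvH hvK hLH
  omega

/-- if an `I`-connected path decomposition of width at most `k-1`
is `S'`-structured, then the bottlenecks `S` and `S'` are well-nested. -/
theorem stmt10 [Fintype V] (k : ℕ) (hk : 1 ≤ k) (G : SimpleGraph V) (I : Set V)
    (l : ℕ) (X : ℕ → Set V) (hP : IsPathDecomp G l X) (hIc : IsIConn G l X I)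
    (hw : pdWidth l X ≤ k - 1)
    (S S' : Set V) (hS : IsBottleneck G k S) (hS' : IsBottleneck G k S')
    (hstr : IsStructured G l X S') :
    botInterval G l X S' ⊂ botInterval G l X S ∨
    botInterval G l X S ⊆ botInterval G l X S' ∨
    botInterval G l X S ∩ botInterval G l X S' = ∅ := by
  unfold botInterval
  by_contra hcon
  push Not at hcon
  obtain ⟨hA, hB, t, ⟨ht1, ht2⟩, ht1', ht2'⟩ := hcon
  have hA' : ¬ Set.Icc (botStart G l X S') (botEnd G l X S') ⊆
      Set.Icc (botStart G l X S) (botEnd G l X S) := fun h => hA ⟨h, hB⟩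
  rw [Set.Icc_subset_Icc_iff (ht1'.trans ht2')] at hA'
  rw [Set.Icc_subset_Icc_iff (ht1.trans ht2)] at hB
  rcases lt_or_ge (botStart G l X S) (botStart G l X S') with h | h
  · exact not_cross_right hP hstr h (by omega) (by omega)
  · exact not_cross_left (S := S) hP hstr (by omega) (by omega) (by omega)
end

section
/- Let k be a positive integer, let G be a finite simple graph, let P = (X_1,…,X_l) be a path decomposition of G in which every bag has size at most k, and let S be a nonempty subset of V(G). Then the number of S-branches H such that S ⊄ X_{a(H)} is at most k. -/
/-!
For `s ∈ S` let `f s` be the first index of a bag containing `s`, and let `s₀ ∈ S` maximize `f`;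
put `t = f s₀`. Every `S`-branch `C` is adjacent to every `s ∈ S`, hence shares with it a bag, whose
index is at least both `a(C)` and `f s`.

* If `t ≤ a(C)`, then each `s ∈ S` lies in a bag of index at most `a(C)` and in one of index at
  least `a(C)`, so `S ⊆ X (a(C))`.
* If `a(C) < t`, then `C` meets a bag before `t` and, through its bag shared with `s₀`, one at or
  after `t`; as `C` is connected, it meets `X t` (`connected_meets_bag`).

So all branches with `S ⊄ X (a(C))` meet the bag `X t`, and since distinct components of `G - S` are
disjoint (`comp_subset_of_mem`), there are at most `|X t| ≤ k` of them.
-/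

open SimpleGraph

variable {V : Type*}

/-- A property that propagates along the edges inside a connected set holds on all of the set as
soon as it holds at one vertex. -/
lemma connected_propagate {G : SimpleGraph V} {C : Set V} (hC : (G.induce C).Connected)
    (p : V → Prop) (hp : ∀ u ∈ C, ∀ v ∈ C, G.Adj u v → p u → p v)
    {x y : V} (hx : x ∈ C) (hy : y ∈ C) (hpx : p x) : p y := by
  obtain ⟨w⟩ := hC.preconnected ⟨x, hx⟩ ⟨y, hy⟩
  have key : ∀ (a b : C), (G.induce C).Walk a b → p a → p b := by
    intro a b w
    induction w with
    | nil => exact id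
    | cons h _ ih => exact fun ha => ih (hp _ (Subtype.prop _) _ (Subtype.prop _) h ha)
  exact key _ _ w hpx

/-- The bags meeting a connected set form an interval. -/
lemma connected_meets_bag {G : SimpleGraph V} {l : ℕ} {X : ℕ → Set V} (hP : IsPathDecomp G l X)
    {C : Set V} (hC : (G.induce C).Connected) {i j m : ℕ} (hij : i < j) (hjm : j ≤ m) (hm : m < l)
    (hi : (C ∩ X i).Nonempty) (hmC : (C ∩ X m).Nonempty) : (C ∩ X j).Nonempty := by
  by_contra hne
  obtain ⟨x, hxC, hxi⟩ := hi
  obtain ⟨y, hyC, hym⟩ := hmC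
  have hnot : ∀ v ∈ C, v ∉ X j := fun v hv hvj => hne ⟨v, hv, hvj⟩
  -- If `C` misses `X j`, then "lies in a bag before `j`" propagates along the edges inside `C`.
  obtain ⟨n, hn, hyn⟩ := connected_propagate hC (fun v => ∃ n < j, v ∈ X n) (by
    rintro u hu v hv huv ⟨n, hn, hun⟩
    obtain ⟨q, hq, huq, hvq⟩ := hP.2.1 u v huv
    rcases lt_or_ge q j with h | h
    · exact ⟨q, h, hvq⟩
    · exact absurd (hP.2.2 n j q hn.le h hq ⟨hun, huq⟩) (hnot u hu)) hxC hyC ⟨i, hij, hxi⟩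
  exact hnot y hyC (hP.2.2 n j m hn.le hjm hm ⟨hyn, hym⟩)

lemma comp_subset_of_mem {G : SimpleGraph V} {S C D : Set V} (hC : IsCompOf G S C)
    (hD : IsCompOf G S D) {x : V} (hxC : x ∈ C) (hxD : x ∈ D) : C ⊆ D := fun _ hy =>
  connected_propagate hC.2.2.1 (· ∈ D)
    (fun u _ v hv huv hu => hD.2.2.2 u hu v (hC.2.1 hv) huv) hxC hy hxD

/-- for a path decomposition with bags of size at most `k` and a
nonempty `S`, at most `k` `S`-branches `H` satisfy `S ⊄ X (a H)`. -/
theorem stmt14 [Fintype V] (k : ℕ) (hk : 1 ≤ k) (G : SimpleGraph V) (l : ℕ)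
    (X : ℕ → Set V) (hP : IsPathDecomp G l X) (hw : ∀ i < l, (X i).ncard ≤ k)
    (S : Set V) (hS : S.Nonempty) :
    {C : Set V | IsBranch G S C ∧ ¬ S ⊆ X (firstIdx l X C)}.ncard ≤ k := by
  classical
  have hfirst : ∀ v, ∃ i, (i < l ∧ v ∈ X i) ∧ ∀ j, j < l → v ∈ X j → i ≤ j := fun v =>
    ⟨Nat.find (hP.1 v), Nat.find_spec (hP.1 v), fun j h1 h2 => Nat.find_min' (hP.1 v) ⟨h1, h2⟩⟩
  choose f hf hfmin using hfirst
  obtain ⟨s₀, hs₀, hmax⟩ := Set.exists_max_image S f S.toFinite hS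
  have hmeet : ∀ C ∈ {C : Set V | IsBranch G S C ∧ ¬ S ⊆ X (firstIdx l X C)},
      ∃ x ∈ C, x ∈ X (f s₀) := by
    rintro C ⟨⟨hC, hN⟩, hbad⟩
    have hshare : ∀ s ∈ S, ∃ q < l, s ∈ X q ∧ (C ∩ X q).Nonempty := by
      intro s hs
      rw [← hN] at hs
      obtain ⟨-, u, hu, hus⟩ := hs
      obtain ⟨q, hq, huq, hsq⟩ := hP.2.1 u s hus
      exact ⟨q, hq, hsq, u, hu, huq⟩
    obtain ⟨m, hm, hsm, hCm⟩ := hshare s₀ hs₀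
    have hsupp : firstIdx l X C ∈ supp l X C := Nat.sInf_mem ⟨m, hm, hCm⟩
    have hlt : firstIdx l X C < f s₀ := by
      by_contra! hge
      refine hbad fun s hs => ?_
      obtain ⟨q, hq, hsq, hCq⟩ := hshare s hs
      exact hP.2.2 (f s) _ q ((hmax s hs).trans hge) (Nat.sInf_le ⟨hq, hCq⟩) hq
        ⟨(hf s).2, hsq⟩
    exact connected_meets_bag hP hC.2.2.1 hlt (hfmin s₀ m hm hsm) hm hsupp.2 hCm
  have : Nonempty V := ⟨s₀⟩
  choose! g hgC hgX using hmeet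
  refine (Set.ncard_le_ncard_of_injOn g hgX ?_ (Set.toFinite _)).trans (hw _ (hf s₀).1)
  intro C hC D hD hCD
  have hCg := hgC C hC
  have hDg := hgC D hD
  rw [← hCD] at hDg
  exact (comp_subset_of_mem hC.1.1 hD.1.1 hCg hDg).antisymm
    (comp_subset_of_mem hD.1.1 hC.1.1 hDg hCg)
end

section
/- Let k be a positive integer, let G be a finite simple graph, let P = (X_1,…,X_l) be a path decomposition of G in which every bag has size at most k, and let S be a nonempty subset of V(G). Then the number of S-branches H such that S ⊆ X_{a(H)} and S ⊄ X_{b(H)} is at most k. -/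
/-!
Let `F` be the family of branches being counted and let `m` be the largest first index `a(C)` over
`C ∈ F`. Then `S ⊆ X m`. If some `C ∈ F` had `b(C) ≤ m`, then `a(C) ≤ b(C) ≤ m` and the
interpolation condition would put `S ⊆ X (a(C)) ∩ X m` inside `X (b(C))`, which is excluded. Hence
`a(C) ≤ m ≤ b(C)` for every `C ∈ F`, and since the bags meeting a connected set form an interval
(`inter_bag_nonempty`), every `C ∈ F` has a vertex in `X m`. Distinct branches are disjoint
(`eq_of_mem_of_isCompOf`), so these vertices are distinct and `F` has at most `|X m| ≤ k` members.
-/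

open SimpleGraph

variable {V : Type*}

/-- A property that passes along edges inside a connected vertex set spreads from one vertex to
all of it. -/
lemma forall_of_connected {G : SimpleGraph V} {C : Set V} (hC : (G.induce C).Connected)
    {Q : V → Prop} (hQ : ∀ u ∈ C, ∀ w ∈ C, G.Adj u w → Q u → Q w)
    {v : V} (hv : v ∈ C) (hQv : Q v) : ∀ w ∈ C, Q w := by
  intro w hw
  obtain ⟨p⟩ := hC.preconnected ⟨v, hv⟩ ⟨w, hw⟩
  have key : ∀ (x y : C), (G.induce C).Walk x y → Q x → Q y := by
    intro x y p
    induction p with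
    | nil => exact id
    | cons h _ ih => exact fun hx => ih (hQ _ (Subtype.property _) _ (Subtype.property _) h hx)
  exact key _ _ p hQv

/-- Connected components of `G - S` sharing a vertex coincide. -/
lemma eq_of_mem_of_isCompOf {G : SimpleGraph V} {S C D : Set V} (hC : IsCompOf G S C)
    (hD : IsCompOf G S D) {v : V} (hvC : v ∈ C) (hvD : v ∈ D) : C = D := by
  obtain ⟨-, hCS, hCc, hCm⟩ := hC
  obtain ⟨-, hDS, hDc, hDm⟩ := hD
  exact Set.Subset.antisymm
    (forall_of_connected (Q := (· ∈ D)) hCc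
      (fun u _ w hw h hu => hDm u hu w (hCS hw) h) hvC hvD)
    (forall_of_connected (Q := (· ∈ C)) hDc
      (fun u _ w hw h hu => hCm u hu w (hDS hw) h) hvD hvC)

/-- The bags meeting a connected vertex set form an interval. -/
lemma inter_bag_nonempty {G : SimpleGraph V} {l : ℕ} {X : ℕ → Set V} (hP : IsPathDecomp G l X)
    {C : Set V} (hC : (G.induce C).Connected) {a t b : ℕ} (ha : (C ∩ X a).Nonempty)
    (hb : (C ∩ X b).Nonempty) (hat : a ≤ t) (htb : t ≤ b) (hbl : b < l) :
    (C ∩ X t).Nonempty := by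
  by_contra hne
  have hno : ∀ v ∈ C, v ∉ X t := fun v hv hvt => hne ⟨v, hv, hvt⟩
  obtain ⟨-, hedge, hint⟩ := hP
  obtain ⟨x, hxC, hxa⟩ := ha
  obtain ⟨y, hyC, hyb⟩ := hb
  -- If `X t` misses `C`, occurring in a bag up to `t` passes to neighbours inside `C`.
  obtain ⟨i, hi, hyi⟩ : ∃ i ≤ t, y ∈ X i := by
    refine forall_of_connected (Q := fun v => ∃ i ≤ t, v ∈ X i) hC ?_ hxC ⟨a, hat, hxa⟩ y hyC
    rintro u hu w - huw ⟨i, hi, hui⟩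
    obtain ⟨j, hj, huj, hwj⟩ := hedge u w huw
    rcases le_total j t with h | h
    · exact ⟨j, h, hwj⟩
    · exact absurd (hint i t j hi h hj ⟨hui, huj⟩) (hno u hu)
  exact hno y hyC (hint i t b hi htb hbl ⟨hyi, hyb⟩)

/-- for a path decomposition with bags of size at most `k` and a
nonempty `S`, at most `k` `S`-branches `H` satisfy `S ⊆ X (a H)` and
`S ⊄ X (b H)`. -/
theorem stmt15 [Fintype V] (k : ℕ) (hk : 1 ≤ k) (G : SimpleGraph V) (l : ℕ)
    (X : ℕ → Set V) (hP : IsPathDecomp G l X) (hw : ∀ i < l, (X i).ncard ≤ k)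
    (S : Set V) (hS : S.Nonempty) :
    {C : Set V | IsBranch G S C ∧ S ⊆ X (firstIdx l X C) ∧
      ¬ S ⊆ X (lastIdx l X C)}.ncard ≤ k := by
  set F : Set (Set V) := {C : Set V | IsBranch G S C ∧ S ⊆ X (firstIdx l X C) ∧
      ¬ S ⊆ X (lastIdx l X C)}
  rcases F.eq_empty_or_nonempty with h0 | hne
  · simp [h0]
  obtain ⟨M, hM, hmax⟩ := F.toFinite.exists_maximalFor (firstIdx l X) F hne
  have hfirst : ∀ C ∈ F, firstIdx l X C ∈ supp l X C := fun C hC =>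
    Nat.sInf_mem (supp_nonempty hP hC.1.1.1)
  have hbdd : ∀ C, BddAbove (supp l X C) := fun C => ⟨l, fun t ht => ht.1.le⟩
  have hlast : ∀ C ∈ F, lastIdx l X C ∈ supp l X C := fun C hC =>
    Nat.sSup_mem (supp_nonempty hP hC.1.1.1) (hbdd C)
  set m := firstIdx l X M
  have hml : m < l := (hfirst M hM).1
  have hmeet : ∀ C ∈ F, (C ∩ X m).Nonempty := by
    intro C hC
    have ham : firstIdx l X C ≤ m := (le_total _ _).elim id (hmax hC)
    have hab : firstIdx l X C ≤ lastIdx l X C := le_csSup (hbdd C) (hfirst C hC)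
    have hmb : m ≤ lastIdx l X C := by
      by_contra! h
      exact hC.2.2 fun s hs => hP.2.2 _ _ _ hab h.le hml ⟨hC.2.1 hs, hM.2.1 hs⟩
    exact inter_bag_nonempty hP hC.1.1.2.2.1 (hfirst C hC).2 (hlast C hC).2 ham hmb (hlast C hC).1
  have : Nonempty V := ⟨hS.some⟩
  choose! f hf using hmeet
  refine (Set.ncard_le_ncard_of_injOn f (fun C hC => (hf C hC).2) ?_ (X m).toFinite).trans
    (hw m hml)
  intro C hC D hD hCD
  exact eq_of_mem_of_isCompOf hC.1.1 hD.1.1 (hf C hC).1 (hCD ▸ (hf D hD).1)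
end
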